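/- Assume that A0 is a left Noetherian ring and that M admits a V-filtration (V^α)_{α∈ℚ}. Then for every α ∈ ℚ and every w ∈ M, one has w ∈ V^α if and only if the b-function b_w of w (the monic generator of the ideal I_w, which is nonzero and has only rational roots) has all of its roots ≤ −α. -/

import Mathlib

open Module

section VFiltration

variable {k : Type*} [Field k] [CharZero k]
variable {M : Type*} [AddCommGroup M] [Module k M]

/-- The subalgebra `A0 ⊆ End_k(M)` generated by `T`, `S = -(D∘T)` and the set `C`. -/
def VFilt.A0 (T D : Module.End k M) (C : Set (Module.End k M)) :
    Subalgebra k (Module.End k M) :=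
  Algebra.adjoin k ({T, -(D * T)} ∪ C)

/-- `V^{>α} = ⋃_{β > α} V^β`. -/
def VFilt.gt (V : ℚ → Submodule k M) (α : ℚ) : Submodule k M := ⨆ β > α, V β

/-- A weak `V`-filtration on `M` with respect to the data `T`, `D`, `C`. -/
structure IsWeakVFiltration (T D : Module.End k M) (C : Set (Module.End k M))
    (V : ℚ → Submodule k M) : Prop where
  /-- decreasing -/
  antitone : Antitone V
  /-- exhaustive -/
  exhaustive : ∀ m : M, ∃ α : ℚ, m ∈ V α
  /-- discrete and left-continuous -/
  discrete : ∃ ℓ : ℕ, 0 < ℓ ∧ ∀ (i : ℤ) (α β : ℚ),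
    α ∈ Set.Ioc ((i : ℚ) / ℓ) ((i + 1 : ℚ) / ℓ) →
    β ∈ Set.Ioc ((i : ℚ) / ℓ) ((i + 1 : ℚ) / ℓ) → V α = V β
  /-- each `V^α` is stable under every element of `A0` -/
  stable : ∀ a ∈ VFilt.A0 T D C, ∀ α : ℚ, (V α).map a ≤ V α
  /-- `T(V^α) ⊆ V^{α+1}` -/
  mapT_le : ∀ α : ℚ, (V α).map T ≤ V (α + 1)
  /-- `D(V^α) ⊆ V^{α-1}` -/
  mapD_le : ∀ α : ℚ, (V α).map D ≤ V (α - 1)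
  /-- `(S + α·id)^N (V^α) ⊆ V^{>α}` for some `N ≥ 1` -/
  nilpotent : ∀ α : ℚ, ∃ N : ℕ, 1 ≤ N ∧ ∀ u ∈ V α,
    ((-(D * T) + (α : k) • (1 : Module.End k M)) ^ N) u ∈ VFilt.gt V α

/-- A `V`-filtration on `M`: a weak `V`-filtration such that each `V^α` is a finitely
generated `A0`-module and `T(V^α) = V^{α+1}` for `α > 0`. -/
structure IsVFiltration (T D : Module.End k M) (C : Set (Module.End k M))
    (V : ℚ → Submodule k M) extends IsWeakVFiltration T D C V : Prop where
  /-- each `V^α` is a finitely generated `A0`-module: it is the smallest `A0`-stable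
  `k`-subspace containing some finite set -/
  fg : ∀ α : ℚ, ∃ F : Finset M, (↑F : Set M) ⊆ (V α : Set M) ∧
    ∀ W : Submodule k M, (∀ a ∈ VFilt.A0 T D C, W.map a ≤ W) →
      (↑F : Set M) ⊆ (W : Set M) → V α ≤ W
  /-- `T(V^α) = V^{α+1}` for `α > 0` -/
  mapT_eq : ∀ α : ℚ, 0 < α → (V α).map T = V (α + 1)

end VFiltration

/-- The ideal `I_w = {b ∈ k[x] : b(S)(w) ∈ A0·(T w)}` attached to `w ∈ M`
(abstracting the condition `b(s)·w ∈ V^1 D_{X×A¹}·w` defining the `b`-function of `w`). -/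
def VFilt.bSet {k : Type*} [Field k] [CharZero k]
    {M : Type*} [AddCommGroup M] [Module k M]
    (T D : Module.End k M) (C : Set (Module.End k M)) (w : M) : Set (Polynomial k) :=
  {b : Polynomial k | ∃ a ∈ VFilt.A0 T D C, (Polynomial.aeval (-(D * T)) b) w = a (T w)}


section Aux

variable {k : Type*} [Field k] [CharZero k]
variable {M : Type*} [AddCommGroup M] [Module k M]

lemma VAux.T_mem (T D : Module.End k M) (C : Set (Module.End k M)) : T ∈ VFilt.A0 T D C :=
  Algebra.subset_adjoin (by simp)

lemma VAux.S_mem (T D : Module.End k M) (C : Set (Module.End k M)) :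
    -(D * T) ∈ VFilt.A0 T D C :=
  Algebra.subset_adjoin (by simp)

lemma VAux.aeval_mem (T D : Module.End k M) (C : Set (Module.End k M)) (p : Polynomial k) :
    Polynomial.aeval (-(D * T)) p ∈ VFilt.A0 T D C := by
  have := (Polynomial.aeval (⟨-(D * T), VAux.S_mem T D C⟩ : VFilt.A0 T D C) p).2
  rwa [← Subalgebra.coe_val, ← Polynomial.aeval_algHom_apply] at this

lemma VAux.swap (T D : Module.End k M) (C : Set (Module.End k M))
    (hweyl : D * T - T * D = 1) (hC : ∀ c ∈ C, Commute c T ∧ Commute c D)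
    (a : Module.End k M) (ha : a ∈ VFilt.A0 T D C) :
    ∃ a' ∈ VFilt.A0 T D C, T * a = a' * T := by
  induction ha using Algebra.adjoin_induction with
  | mem x hx =>
    rcases hx with (rfl | rfl) | hx
    · exact ⟨x, VAux.T_mem _ _ _, rfl⟩
    · refine ⟨-(D * T) + 1, add_mem (VAux.S_mem _ _ _) (one_mem _), ?_⟩
      rw [← hweyl]; noncomm_ring
    · exact ⟨x, Algebra.subset_adjoin (Or.inr hx), ((hC x hx).1.eq).symm⟩
  | algebraMap r => exact ⟨_, Subalgebra.algebraMap_mem _ r, (Algebra.commutes r T).symm⟩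
  | add x y _ _ hx hy =>
    obtain ⟨x', hx', ex⟩ := hx
    obtain ⟨y', hy', ey⟩ := hy
    exact ⟨x' + y', add_mem hx' hy', by rw [mul_add, add_mul, ex, ey]⟩
  | mul x y _ _ hx hy =>
    obtain ⟨x', hx', ex⟩ := hx
    obtain ⟨y', hy', ey⟩ := hy
    exact ⟨x' * y', mul_mem hx' hy', by rw [← mul_assoc, ex, mul_assoc, ey, mul_assoc]⟩

lemma VAux.swap_pow (T D : Module.End k M) (C : Set (Module.End k M))
    (hweyl : D * T - T * D = 1) (hC : ∀ c ∈ C, Commute c T ∧ Commute c D) (n : ℕ) :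
    ∀ a ∈ VFilt.A0 T D C, ∃ a' ∈ VFilt.A0 T D C, T ^ n * a = a' * T ^ n := by
  induction n with
  | zero => intro a ha; exact ⟨a, ha, by simp⟩
  | succ n ih =>
    intro a ha
    obtain ⟨a', ha', e⟩ := VAux.swap T D C hweyl hC a ha
    obtain ⟨b, hb, e2⟩ := ih a' ha'
    exact ⟨b, hb, by rw [pow_succ, mul_assoc, e, ← mul_assoc, e2, mul_assoc]⟩

/-- Artin-Rees type statement. -/
lemma VAux.artin_rees (T D : Module.End k M) (C : Set (Module.End k M))
    (hweyl : D * T - T * D = 1) (hC : ∀ c ∈ C, Commute c T ∧ Commute c D)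
    (hNoeth : IsNoetherianRing ↥(VFilt.A0 T D C))
    (V : ℚ → Submodule k M) (hV : IsVFiltration T D C V) (β : ℚ) (w : M) :
    ∃ n : ℕ, ∀ u ∈ V β, (∃ a ∈ VFilt.A0 T D C, (T ^ (n + 1)) u = a w) →
      ∃ a ∈ VFilt.A0 T D C, (T ^ (n + 1)) u = a (T w) := by
  let E : Submodule (VFilt.A0 T D C) M :=
    { carrier := V β
      add_mem' := fun h1 h2 => add_mem h1 h2
      zero_mem' := zero_mem _
      smul_mem' := fun a x hx => hV.stable a.1 a.2 β ⟨x, hx, rfl⟩ }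
  have hE : E.FG := by
    obtain ⟨F, hF, hF2⟩ := hV.fg β
    refine ⟨F, le_antisymm (Submodule.span_le.2 hF) ?_⟩
    intro x hx
    let W : Submodule k M :=
      { carrier := Submodule.span (VFilt.A0 T D C) (F : Set M)
        add_mem' := fun h1 h2 => add_mem h1 h2
        zero_mem' := zero_mem _
        smul_mem' := fun c x hx => by
          have := Submodule.smul_mem _ (algebraMap k (VFilt.A0 T D C) c) hx
          exact this }
    refine hF2 W ?_ Submodule.subset_span hx
    rintro a ha _ ⟨y, hy, rfl⟩
    exact Submodule.smul_mem (Submodule.span (VFilt.A0 T D C) (F : Set M)) ⟨a, ha⟩ hy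
  have : IsNoetherian (VFilt.A0 T D C) E := isNoetherian_of_fg_of_noetherian E hE
  let N : ℕ →o Submodule (VFilt.A0 T D C) E :=
    { toFun := fun j =>
        { carrier := {u | ∃ a ∈ VFilt.A0 T D C, (T ^ j) (u : M) = a w}
          add_mem' := by
            rintro u v ⟨a, ha, e⟩ ⟨b, hb, e'⟩
            exact ⟨a + b, add_mem ha hb, by simp [e, e']⟩
          zero_mem' := ⟨0, zero_mem _, by simp⟩
          smul_mem' := by
            rintro c u ⟨a, ha, e⟩
            obtain ⟨c', hc', e'⟩ := VAux.swap_pow T D C hweyl hC j c.1 c.2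
            refine ⟨c' * a, mul_mem hc' ha, ?_⟩
            have := congrArg (fun f : Module.End k M => f (u : M)) e'
            simp only [Module.End.mul_apply] at this
            rw [Module.End.mul_apply, ← e, ← this]
            rfl }
      monotone' := by
        refine monotone_nat_of_le_succ ?_
        rintro j u ⟨a, ha, e⟩
        exact ⟨T * a, mul_mem (VAux.T_mem _ _ _) ha, by
          rw [pow_succ', Module.End.mul_apply, e, Module.End.mul_apply]⟩ }
  obtain ⟨n, hn⟩ := monotone_stabilizes_iff_noetherian.2 this N
  refine ⟨n, fun u hu h => ?_⟩
  have h1 : (⟨u, hu⟩ : E) ∈ N (n + 1) := h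
  rw [← hn (n + 1) (by omega)] at h1
  obtain ⟨a, ha, e⟩ := h1
  obtain ⟨a', ha', e'⟩ := VAux.swap T D C hweyl hC a ha
  refine ⟨a', ha', ?_⟩
  rw [pow_succ', Module.End.mul_apply]
  change T ((T ^ n) u) = _
  rw [show (T ^ n) u = a w from e]
  exact congrArg (fun f : Module.End k M => f w) e'

lemma VAux.pow_surj (T D : Module.End k M) (C : Set (Module.End k M))
    (V : ℚ → Submodule k M) (hV : IsVFiltration T D C V) (β : ℚ) (hβ : 0 < β) (n : ℕ) :
    ∀ x ∈ V (β + n), ∃ u ∈ V β, (T ^ n) u = x := by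
  induction n with
  | zero => intro x hx; exact ⟨x, by simpa using hx, by simp⟩
  | succ n ih =>
    intro x hx
    have h := hV.mapT_eq (β + n) (by positivity)
    rw [Nat.cast_succ, ← add_assoc, ← h] at hx
    obtain ⟨y, hy, rfl⟩ := hx
    obtain ⟨u, hu, rfl⟩ := ih y hy
    exact ⟨u, hu, by rw [pow_succ', Module.End.mul_apply]⟩

lemma VAux.gt_le (V : ℚ → Submodule k M) (hA : Antitone V) (l : ℕ) 
    (hl : 0 < l) (hd : ∀ (i : ℤ) (α β : ℚ),
    α ∈ Set.Ioc ((i : ℚ) / l) ((i + 1 : ℚ) / l) →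
    β ∈ Set.Ioc ((i : ℚ) / l) ((i + 1 : ℚ) / l) → V α = V β) (i : ℤ) :
    VFilt.gt V ((i : ℚ) / l) ≤ V ((i + 1 : ℚ) / l) := by
  refine iSup₂_le fun β hβ => ?_
  rcases le_total β ((i + 1 : ℚ) / l) with h | h
  · refine (hd i _ _ ⟨hβ, h⟩ ⟨?_, le_rfl⟩).le
    have : (0 : ℚ) < l := by exact_mod_cast hl
    gcongr; linarith
  · exact hA h

lemma VAux.grid (V : ℚ → Submodule k M) (l : ℕ)
    (hl : 0 < l) (hd : ∀ (i : ℤ) (α β : ℚ),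
    α ∈ Set.Ioc ((i : ℚ) / l) ((i + 1 : ℚ) / l) →
    β ∈ Set.Ioc ((i : ℚ) / l) ((i + 1 : ℚ) / l) → V α = V β) (α : ℚ) :
    V α = V ((⌈α * l⌉ : ℚ) / l) := by
  have hl' : (0 : ℚ) < l := by exact_mod_cast hl
  have h1 := Int.ceil_lt_add_one (α * l)
  have h2 := Int.le_ceil (α * l)
  have h3 : (((⌈α * l⌉ - 1 : ℤ) : ℚ) + 1) = ⌈α * l⌉ := by push_cast; ring
  refine hd (⌈α * l⌉ - 1) _ _ ⟨?_, ?_⟩ ⟨?_, ?_⟩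
  · rw [div_lt_iff₀ hl']; linarith
  · rw [le_div_iff₀ hl']; linarith
  · rw [div_lt_div_iff_of_pos_right hl']; linarith
  · rw [h3]

lemma VAux.exists_poly (T D : Module.End k M) (C : Set (Module.End k M))
    (V : ℚ → Submodule k M) (hV : IsVFiltration T D C V) (l : ℕ) 
    (hl : 0 < l) (hd : ∀ (i : ℤ) (α β : ℚ),
    α ∈ Set.Ioc ((i : ℚ) / l) ((i + 1 : ℚ) / l) →
    β ∈ Set.Ioc ((i : ℚ) / l) ((i + 1 : ℚ) / l) → V α = V β) (c : ℤ) (w : M)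
    (hw : w ∈ V ((c : ℚ) / l)) (n : ℕ) :
    ∃ b : Polynomial k, (∀ x : k, b.IsRoot x → ∃ δ : ℚ, x = δ ∧ δ ≤ -((c : ℚ) / l)) ∧
      (Polynomial.aeval (-(D * T)) b) w ∈ V (((c + n : ℤ) : ℚ) / l) := by
  have hl' : (0 : ℚ) < l := by exact_mod_cast hl
  induction n with
  | zero => exact ⟨1, by simp, by simpa using hw⟩
  | succ n ih =>
    obtain ⟨b, hb, hm⟩ := ih
    obtain ⟨N, _, hN⟩ := hV.nilpotent (((c + n : ℤ) : ℚ) / l)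
    refine ⟨(Polynomial.X + Polynomial.C ((((c + n : ℤ) : ℚ) / l : ℚ) : k)) ^ N * b, ?_, ?_⟩
    · intro x hx
      rw [Polynomial.IsRoot, Polynomial.eval_mul, mul_eq_zero] at hx
      rcases hx with hx | hx
      · rw [Polynomial.eval_pow] at hx
        have hx := eq_zero_of_pow_eq_zero hx
        rw [Polynomial.eval_add, Polynomial.eval_X, Polynomial.eval_C] at hx
        refine ⟨-(((c + n : ℤ) : ℚ) / l), ?_, ?_⟩
        · rw [Rat.cast_neg]; exact eq_neg_of_add_eq_zero_left hx
        · gcongr; simp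
      · exact hb x hx
    · have h := VAux.gt_le V hV.antitone l hl hd (c + n) (hN _ hm)
      rw [map_mul, Module.End.mul_apply]
      have e : (((c + n : ℤ) : ℚ) + 1) = ((c + (n + 1 : ℕ) : ℤ) : ℚ) := by push_cast; ring
      rw [e] at h
      convert h using 2
      simp [Algebra.algebraMap_eq_smul_one]

end Aux

theorem stmt14 {k : Type*} [Field k] [CharZero k]
    {M : Type*} [AddCommGroup M] [Module k M]
    (T D : Module.End k M) (C : Set (Module.End k M))
    (hweyl : D * T - T * D = 1)
    (hC : ∀ c ∈ C, Commute c T ∧ Commute c D)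
    (hNoeth : IsNoetherianRing ↥(VFilt.A0 T D C))
    (V : ℚ → Submodule k M) (hV : IsVFiltration T D C V) :
    ∀ (α : ℚ) (w : M) (bw : Polynomial k) (L : Multiset ℚ),
      bw.Monic → bw ∈ VFilt.bSet T D C w → (∀ c ∈ VFilt.bSet T D C w, bw ∣ c) →
      bw = (L.map fun γ : ℚ => Polynomial.X - Polynomial.C (γ : k)).prod →
      (w ∈ V α ↔ ∀ γ ∈ L, γ ≤ -α) := by
  intro α w bw L hmon hbw hdvd hL
  obtain ⟨l, hl, hd⟩ := hV.discrete
  have hl' : (0 : ℚ) < l := by exact_mod_cast hl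
  constructor
  · intro hw γ hγ
    rw [VAux.grid V l hl hd α] at hw
    set c := ⌈α * l⌉ with hc
    obtain ⟨n, hn⟩ := VAux.artin_rees T D C hweyl hC hNoeth V hV 1 w
    obtain ⟨m, hm⟩ := exists_nat_ge ((1 + (n + 1 : ℕ) : ℚ) * l - c)
    obtain ⟨b, hb, hbm⟩ := VAux.exists_poly T D C V hV l hl hd c w hw m
    have hmem : (Polynomial.aeval (-(D * T)) b) w ∈ V (1 + (n + 1 : ℕ)) := by
      refine hV.antitone ?_ hbm
      rw [le_div_iff₀ hl']
      push_cast at hm ⊢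
      linarith
    obtain ⟨u, hu, e⟩ := VAux.pow_surj T D C V hV 1 one_pos (n + 1) _ hmem
    obtain ⟨a, ha, e2⟩ := hn u hu ⟨_, VAux.aeval_mem T D C b, e⟩
    have hdb := hdvd b ⟨a, ha, by rw [← e, e2]⟩
    have hroot : bw.IsRoot (γ : k) := by
      rw [← Polynomial.dvd_iff_isRoot, hL]
      exact Multiset.dvd_prod (Multiset.mem_map_of_mem _ hγ)
    obtain ⟨δ, h1, h2⟩ := hb _ (hroot.dvd hdb)
    have : γ = δ := by exact_mod_cast h1
    have h3 : α ≤ (c : ℚ) / l := by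
      rw [le_div_iff₀ hl']; exact Int.le_ceil _
    linarith
  · intro h
    rw [VAux.grid V l hl hd α]
    obtain ⟨β, hβ⟩ := hV.exhaustive w
    have hstep : ∀ j : ℤ, j < ⌈α * l⌉ → w ∈ V ((j : ℚ) / l) → w ∈ V (((j + 1 : ℤ) : ℚ) / l) := by
      intro j hj hw
      obtain ⟨N, _, hN⟩ := hV.nilpotent ((j : ℚ) / l)
      have h1 := VAux.gt_le V hV.antitone l hl hd j (hN _ hw)
      have hlt : (j : ℚ) / l < α := by
        rw [div_lt_iff₀ hl']; exact Int.lt_ceil.1 hj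
      have hcop : IsCoprime bw
          ((Polynomial.X + Polynomial.C ((((j : ℚ) / l : ℚ)) : k)) ^ N) := by
        apply IsCoprime.pow_right
        rw [hL]
        refine Multiset.prod_induction (fun p => IsCoprime p _) _
          (fun a b ha hb => IsCoprime.mul_left ha hb) isCoprime_one_left ?_
        intro p hp
        obtain ⟨γ, hγ, rfl⟩ := Multiset.mem_map.1 hp
        have hne : (γ : k) ≠ ((-((j : ℚ) / l) : ℚ) : k) := by
          intro he
          have : γ = -((j : ℚ) / l) := by exact_mod_cast he
          have := h γ hγ
          linarith
        have := Polynomial.isCoprime_X_sub_C_of_isUnit_sub (sub_ne_zero.2 hne).isUnit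
        simpa [sub_eq_add_neg] using this
      obtain ⟨p, q, hpq⟩ := hcop
      have hw2 := congrArg (fun f => (Polynomial.aeval (-(D * T)) f) w) hpq
      simp only [map_add, map_mul, map_one, Module.End.one_apply, LinearMap.add_apply,
        Module.End.mul_apply] at hw2
      rw [← hw2]
      push_cast
      refine add_mem ?_ ?_
      · refine hV.stable _ (VAux.aeval_mem T D C p) _ ⟨_, ?_, rfl⟩
        obtain ⟨a, ha, e⟩ := hbw
        rw [e]
        refine hV.stable _ ha _ ⟨_, ?_, rfl⟩
        refine hV.antitone ?_ (hV.mapT_le _ ⟨w, hw, rfl⟩)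
        rw [add_div]
        gcongr
        rw [div_le_one hl']
        exact_mod_cast hl
      · refine hV.stable _ (VAux.aeval_mem T D C q) _ ⟨_, ?_, rfl⟩
        convert h1 using 2
        simp [Algebra.algebraMap_eq_smul_one]
    have hbase : w ∈ V ((⌊β * l⌋ : ℚ) / l) := by
      refine hV.antitone ?_ hβ
      rw [div_le_iff₀ hl']; exact Int.floor_le _
    rcases le_total ⌈α * l⌉ ⌊β * l⌋ with hle | hle
    · refine hV.antitone ?_ hbase
      gcongr
    · have key : ∀ j : ℤ, ⌊β * l⌋ ≤ j → j ≤ ⌈α * l⌉ → w ∈ V ((j : ℚ) / l) := by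
        intro j hj
        induction j, hj using Int.le_induction with
        | base => intro _; exact hbase
        | succ j _ ih => intro hj; exact hstep j (by omega) (ih (by omega))
      exact key _ hle le_rfl
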